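/- Let P* be a symmetric positive semidefinite n×n matrix solving the stochastic algebraic Riccati equation. Then for every admissible gain L ∈ ℝ^{m×n}, the solution P of the stochastic Lyapunov equation P = 𝒯_L^*(P) + Q + Lᵀ R L satisfies P* ≤ P in the Loewner order; consequently the average expected cost tr(P D) of any admissible gain satisfies tr(P* D) ≤ tr(P D), so tr(P* D) is the minimal average expected cost. -/

import Mathlib

open Matrix Filter Topology

/-- The sandwich map `X ↦ M * X * Mᵀ` as a linear endomorphism of `n × n` real matrices. -/
noncomputable def sandwich {n : ℕ} (M : Matrix (Fin n) (Fin n) ℝ) :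
    Module.End ℝ (Matrix (Fin n) (Fin n) ℝ) :=
  (LinearMap.mulLeft ℝ M).comp (LinearMap.mulRight ℝ Mᵀ)

/-- The closed-loop covariance operator
`𝒯_L(X) = (A+BL) X (A+BL)ᵀ + Σᵢ ᾱᵢ Aᵢ X Aᵢᵀ + Σⱼ β̄ⱼ (BⱼL) X (BⱼL)ᵀ`. -/
noncomputable def calT {n m p q : ℕ}
    (A : Matrix (Fin n) (Fin n) ℝ) (A' : Fin p → Matrix (Fin n) (Fin n) ℝ)
    (B : Matrix (Fin n) (Fin m) ℝ) (B' : Fin q → Matrix (Fin n) (Fin m) ℝ)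
    (al : Fin p → ℝ) (be : Fin q → ℝ) (L : Matrix (Fin m) (Fin n) ℝ) :
    Module.End ℝ (Matrix (Fin n) (Fin n) ℝ) :=
  sandwich (A + B * L) + ∑ i, al i • sandwich (A' i) + ∑ j, be j • sandwich (B' j * L)

/-- The (trace-)adjoint operator
`𝒯_L^*(P) = (A+BL)ᵀ P (A+BL) + Σᵢ ᾱᵢ Aᵢᵀ P Aᵢ + Σⱼ β̄ⱼ Lᵀ Bⱼᵀ P Bⱼ L`. -/
noncomputable def calTstar {n m p q : ℕ}
    (A : Matrix (Fin n) (Fin n) ℝ) (A' : Fin p → Matrix (Fin n) (Fin n) ℝ)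
    (B : Matrix (Fin n) (Fin m) ℝ) (B' : Fin q → Matrix (Fin n) (Fin m) ℝ)
    (al : Fin p → ℝ) (be : Fin q → ℝ) (L : Matrix (Fin m) (Fin n) ℝ) :
    Module.End ℝ (Matrix (Fin n) (Fin n) ℝ) :=
  sandwich (A + B * L)ᵀ + ∑ i, al i • sandwich (A' i)ᵀ + ∑ j, be j • sandwich (B' j * L)ᵀ

/-- A gain `L` is admissible if the spectral radius of `𝒯_L`, as a linear endomorphism of
the space of `n × n` real matrices, is strictly less than `1`. -/
noncomputable def Admissible {n m p q : ℕ}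
    (A : Matrix (Fin n) (Fin n) ℝ) (A' : Fin p → Matrix (Fin n) (Fin n) ℝ)
    (B : Matrix (Fin n) (Fin m) ℝ) (B' : Fin q → Matrix (Fin n) (Fin m) ℝ)
    (al : Fin p → ℝ) (be : Fin q → ℝ) (L : Matrix (Fin m) (Fin n) ℝ) : Prop :=
  spectralRadius ℝ (calT A A' B B' al be L) < 1

/-!
Fix an admissible `L` and put `S = R + Bᵀ P* B + Σⱼ β̄ⱼ Bⱼᵀ P* Bⱼ`. Completing the square in `L`
turns the Riccati equation into `𝒯_L^*(P*) + Q + Lᵀ R L = P* + (L - L*)ᵀ S (L - L*)`, where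
`L* = -S⁻¹ Bᵀ P* A`. Subtracting from the Lyapunov equation, `X = P - P*` satisfies
`X - 𝒯_L^*(X) = (L - L*)ᵀ S (L - L*) ≥ 0`, so it suffices that `(1 - 𝒯_L^*)⁻¹` preserves the
positive semidefinite cone.

Only the real spectrum of the operator is controlled, so the Neumann series of `(1 - 𝒯_L^*)⁻¹` is
not available at once. Instead `(1 - t 𝒯_L^*)⁻¹` is continued from `t = 0` to `t = 1`: the
cone-preserving operators form a closed algebra over the nonnegative reals, and from each `t` one
can move a little to the right by a convergent Neumann series with cone-preserving terms.
-/

open scoped NNReal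

theorem lt_one_of_mem_spectrum_of_spectralRadius_lt_one {𝔸 : Type*} [Ring 𝔸] [Algebra ℝ 𝔸] {a : 𝔸}
    (ha : spectralRadius ℝ a < 1) {r : ℝ} (hr : r ∈ spectrum ℝ a) : r < 1 := by
  by_contra! h
  refine hr (spectrum.mem_resolventSet_of_spectralRadius_lt (ha.trans_le ?_))
  exact_mod_cast h.trans (Real.le_norm_self r)

theorem isUnit_one_sub_smul {𝔸 : Type*} [Ring 𝔸] [Algebra ℝ 𝔸] {a : 𝔸}
    (ha : ∀ r ∈ spectrum ℝ a, r < 1) {t : ℝ} (ht₀ : 0 ≤ t) (ht₁ : t ≤ 1) :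
    IsUnit (1 - t • a) := by
  rcases ht₀.eq_or_lt with rfl | ht₀
  · simp
  have hres : t⁻¹ ∉ spectrum ℝ a := fun h ↦ (ha _ h).not_ge ((one_le_inv₀ ht₀).2 ht₁)
  have hunit := (spectrum.notMem_iff.1 hres).smul (Units.mk0 t ht₀.ne')
  rwa [Units.smul_mk0, smul_sub, Algebra.algebraMap_eq_smul_one,
    smul_inv_smul₀ ht₀.ne'] at hunit

section ClosedSubalgebra

variable {𝔸 : Type*} [NormedRing 𝔸] [NormedAlgebra ℝ 𝔸] [CompleteSpace 𝔸]
  {C : Subalgebra ℝ≥0 𝔸} {a : 𝔸}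

theorem inverse_one_sub_mem_of_norm_lt_one (hC : IsClosed (C : Set 𝔸)) (ha : a ∈ C)
    (hnorm : ‖a‖ < 1) : Ring.inverse (1 - a) ∈ C := by
  rw [NormedRing.inverse_one_sub a hnorm]
  exact tsum_mem hC fun k ↦ pow_mem ha k

theorem eventually_inverse_one_sub_smul_mem (hC : IsClosed (C : Set 𝔸)) (ha : a ∈ C) {t : ℝ}
    (ht : IsUnit (1 - t • a)) (hmem : Ring.inverse (1 - t • a) ∈ C) :
    ∀ᶠ u in 𝓝[>] t, Ring.inverse (1 - u • a) ∈ C := by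
  set b := Ring.inverse (1 - t • a) with hb
  have hsmall : ∀ᶠ u in 𝓝[>] t, ‖(u - t) • (b * a)‖ < 1 := by
    have hcont : Continuous fun u : ℝ ↦ ‖(u - t) • (b * a)‖ := by fun_prop
    exact nhdsWithin_le_nhds (hcont.continuousAt.eventually_lt_const (by simp))
  filter_upwards [hsmall, self_mem_nhdsWithin] with u hu htu
  have hfactor : 1 - u • a = (1 - t • a) * (1 - (u - t) • (b * a)) := by
    rw [mul_sub, mul_one, mul_smul_comm, hb, Ring.mul_inverse_cancel_left _ _ ht]
    module
  rw [hfactor, Ring.inverse_mul (.inl ht)]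
  have hpert : (u - t) • (b * a) ∈ C :=
    C.smul_mem (mul_mem hmem ha) ⟨u - t, sub_nonneg.2 htu.le⟩
  exact mul_mem (inverse_one_sub_mem_of_norm_lt_one hC hpert hu) hmem

theorem inverse_one_sub_mem_of_spectrum_lt_one (hC : IsClosed (C : Set 𝔸)) (ha : a ∈ C)
    (hspec : ∀ r ∈ spectrum ℝ a, r < 1) : Ring.inverse (1 - a) ∈ C := by
  have hunit : ∀ t ∈ Set.Icc (0 : ℝ) 1, IsUnit (1 - t • a) :=
    fun t ht ↦ isUnit_one_sub_smul hspec ht.1 ht.2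
  let s : Set ℝ := {t | Ring.inverse (1 - t • a) ∈ C}
  have hcont : ContinuousOn (fun t : ℝ ↦ Ring.inverse (1 - t • a)) (Set.Icc 0 1) := fun t ht ↦
    ((NormedRing.inverse_continuousAt (hunit t ht).unit).comp
      (f := fun t : ℝ ↦ 1 - t • a) (by fun_prop)).continuousWithinAt
  have hclosed : IsClosed (s ∩ Set.Icc 0 1) := by
    rw [Set.inter_comm]
    exact hcont.preimage_isClosed_of_isClosed isClosed_Icc hC
  have hzero : (0 : ℝ) ∈ s := by simp [s]
  have hright : ∀ t ∈ s ∩ Set.Ico 0 1, s ∈ 𝓝[>] t := fun t ht ↦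
    eventually_inverse_one_sub_smul_mem hC ha (hunit t (Set.Ico_subset_Icc_self ht.2)) ht.1
  have hone : (1 : ℝ) ∈ s :=
    hclosed.Icc_subset_of_forall_mem_nhdsWithin hzero hright (Set.right_mem_Icc.2 zero_le_one)
  simpa [s] using hone

end ClosedSubalgebra

section Cone

variable {V : Type*} [NormedAddCommGroup V] [NormedSpace ℝ V]

/-- The algebra of cone-preserving operators, i.e. of the continuous endomorphisms of `V` that map
the cone `K` into itself. Only nonnegative scalars act on it. -/
def coneEnd (K : ProperCone ℝ V) : Subalgebra ℝ≥0 (V →L[ℝ] V) where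
  carrier := {T | Set.MapsTo T K K}
  mul_mem' hS hT := hS.comp hT
  add_mem' hS hT _ hx := add_mem (hS hx) (hT hx)
  algebraMap_mem' r _ hx := K.smul_mem hx r.2

theorem isClosed_coneEnd (K : ProperCone ℝ V) : IsClosed (coneEnd K : Set (V →L[ℝ] V)) := by
  have hinter : (coneEnd K : Set (V →L[ℝ] V)) = ⋂ x ∈ K, {T | T x ∈ K} := by
    ext T
    simp [coneEnd, Set.MapsTo]
  rw [hinter]
  exact isClosed_biInter fun x _ ↦ K.isClosed.preimage (ContinuousLinearMap.apply ℝ V x).continuous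

theorem mem_of_sub_map_mem [FiniteDimensional ℝ V] {K : ProperCone ℝ V} {T : Module.End ℝ V}
    (hT : Set.MapsTo T K K) (hspec : ∀ r ∈ spectrum ℝ T, r < 1) {x : V} (hx : x - T x ∈ K) :
    x ∈ K := by
  let T' : V →L[ℝ] V := Module.End.toContinuousLinearMap V T
  have hspec' : ∀ r ∈ spectrum ℝ T', r < 1 := by rwa [AlgEquiv.spectrum_eq]
  have hinv : Ring.inverse (1 - T') ∈ coneEnd K :=
    inverse_one_sub_mem_of_spectrum_lt_one (isClosed_coneEnd K) hT hspec'
  have hunit : IsUnit (1 - T') := by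
    simpa using isUnit_one_sub_smul hspec' zero_le_one le_rfl
  have hcancel : Ring.inverse (1 - T') (x - T x) = x :=
    DFunLike.congr_fun (Ring.inverse_mul_cancel _ hunit) x
  exact hcancel ▸ hinv hx

end Cone

theorem spectrum_subset_of_isAdjointPair {k V : Type*} [Field k] [AddCommGroup V] [Module k V]
    [FiniteDimensional k V] {B : LinearMap.BilinForm k V} (hB : B.SeparatingRight)
    {S T : Module.End k V} (h : LinearMap.IsAdjointPair B B S T) : spectrum k T ⊆ spectrum k S := by
  intro r hT
  by_contra hS
  rw [spectrum.notMem_iff, Module.End.isUnit_iff] at hS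
  refine hT ?_
  have hinj : Function.Injective (algebraMap k (Module.End k V) r - T) := by
    refine (injective_iff_map_eq_zero _).2 fun y hy ↦ hB y fun x ↦ ?_
    obtain ⟨z, rfl⟩ := hS.2 x
    have hadj : B ((algebraMap k (Module.End k V) r - S) z) y =
        B z ((algebraMap k (Module.End k V) r - T) y) := by
      simp [h z y]
    rw [hadj, hy, map_zero]
  exact (Module.End.isUnit_iff _).2 ⟨hinj, LinearMap.injective_iff_surjective.1 hinj⟩

section TraceForm

variable (ι k : Type*) [Fintype ι] [CommSemiring k]

/-- The trace pairing `(X, Y) ↦ tr (X Y)` on square matrices, with respect to which `𝒯_L` and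
`𝒯_L^*` are adjoint. -/
def matrixTraceForm : LinearMap.BilinForm k (Matrix ι ι k) :=
  (LinearMap.mul k (Matrix ι ι k)).compr₂ (traceLinearMap ι k k)

variable {ι k}

theorem matrixTraceForm_apply (X Y : Matrix ι ι k) : matrixTraceForm ι k X Y = (X * Y).trace :=
  rfl

theorem separatingRight_matrixTraceForm : (matrixTraceForm ι k).SeparatingRight := by
  intro Y hY
  refine ext_iff_trace_mul_left.2 fun X ↦ ?_
  rw [← matrixTraceForm_apply, hY, mul_zero, trace_zero]

end TraceForm

section PosSemidef

variable {ι : Type*}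

theorem isClosed_setOf_posSemidef [Finite ι] : IsClosed {X : Matrix ι ι ℝ | X.PosSemidef} := by
  have := Fintype.ofFinite ι
  simp only [posSemidef_iff_dotProduct_mulVec, Set.ofPred_and, Set.ofPred_forall]
  refine (isClosed_eq (by fun_prop) continuous_id).inter (isClosed_iInter fun x ↦ ?_)
  exact isClosed_le continuous_const (by fun_prop)

variable (ι) in
/-- The cone of symmetric positive semidefinite real matrices, which defines the Loewner order. -/
def posSemidefCone [Finite ι] : ProperCone ℝ (Matrix ι ι ℝ) where
  carrier := {X | X.PosSemidef}
  add_mem' hX hY := hX.add hY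
  zero_mem' := .zero
  smul_mem' c _ hX := hX.smul c.2
  isClosed' := isClosed_setOf_posSemidef

variable [Fintype ι]

theorem trace_mul_nonneg_of_posSemidef {X Y : Matrix ι ι ℝ} (hX : X.PosSemidef)
    (hY : Y.PosSemidef) : 0 ≤ (X * Y).trace := by
  obtain ⟨k, v, rfl⟩ := posSemidef_iff_eq_sum_vecMulVec.1 hY
  rw [Matrix.mul_sum, trace_sum]
  refine Finset.sum_nonneg fun i _ ↦ ?_
  rw [mul_vecMulVec, trace_vecMulVec, dotProduct_comm]
  exact hX.dotProduct_mulVec_nonneg (v i)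

theorem posSemidef_transpose_mul_mul_same {κ : Type*} [Finite κ] {X : Matrix ι ι ℝ}
    (hX : X.PosSemidef) (M : Matrix ι κ ℝ) : (Mᵀ * X * M).PosSemidef :=
  conjTranspose_eq_transpose_of_trivial M ▸ hX.conjTranspose_mul_mul_same M

end PosSemidef

theorem sandwich_apply {n : ℕ} (M X : Matrix (Fin n) (Fin n) ℝ) :
    sandwich M X = M * X * Mᵀ :=
  (Matrix.mul_assoc M X Mᵀ).symm

theorem isAdjointPair_sandwich {n : ℕ} (M : Matrix (Fin n) (Fin n) ℝ) :
    LinearMap.IsAdjointPair (matrixTraceForm (Fin n) ℝ) (matrixTraceForm (Fin n) ℝ)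
      (sandwich M) (sandwich Mᵀ) := by
  intro X Y
  rw [matrixTraceForm_apply, matrixTraceForm_apply, sandwich_apply, sandwich_apply,
    transpose_transpose, Matrix.mul_assoc, Matrix.mul_assoc, trace_mul_comm]
  simp only [Matrix.mul_assoc]

section ClosedLoop

variable {n m p q : ℕ}
  (A : Matrix (Fin n) (Fin n) ℝ) (A' : Fin p → Matrix (Fin n) (Fin n) ℝ)
  (B : Matrix (Fin n) (Fin m) ℝ) (B' : Fin q → Matrix (Fin n) (Fin m) ℝ)
  (al : Fin p → ℝ) (be : Fin q → ℝ) (L : Matrix (Fin m) (Fin n) ℝ)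

theorem isAdjointPair_calT_calTstar :
    LinearMap.IsAdjointPair (matrixTraceForm (Fin n) ℝ) (matrixTraceForm (Fin n) ℝ)
      (calT A A' B B' al be L) (calTstar A A' B B' al be L) := by
  intro X Y
  have hM (M : Matrix (Fin n) (Fin n) ℝ) := isAdjointPair_sandwich M X Y
  simp only [calT, calTstar, LinearMap.add_apply, LinearMap.sum_apply, LinearMap.smul_apply,
    map_add, map_sum, map_smul, hM]

theorem calTstar_apply (X : Matrix (Fin n) (Fin n) ℝ) :
    calTstar A A' B B' al be L X =
      (A + B * L)ᵀ * X * (A + B * L) + ∑ i, al i • ((A' i)ᵀ * X * A' i) +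
        ∑ j, be j • ((B' j * L)ᵀ * X * (B' j * L)) := by
  simp only [calTstar, LinearMap.add_apply, LinearMap.sum_apply, LinearMap.smul_apply,
    sandwich_apply, transpose_transpose]

variable {al be} in
theorem posSemidef_calTstar (hal : ∀ i, 0 ≤ al i) (hbe : ∀ j, 0 ≤ be j)
    {X : Matrix (Fin n) (Fin n) ℝ} (hX : X.PosSemidef) :
    (calTstar A A' B B' al be L X).PosSemidef := by
  have hsand {l : ℕ} (M : Matrix (Fin n) (Fin l) ℝ) := posSemidef_transpose_mul_mul_same hX M
  rw [calTstar_apply]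
  exact ((hsand _).add (posSemidef_sum _ fun i _ ↦ (hsand (A' i)).smul (hal i))).add
    (posSemidef_sum _ fun j _ ↦ (hsand (B' j * L)).smul (hbe j))

variable {A A' B B' al be L}

theorem lt_one_of_mem_spectrum_calTstar (hL : Admissible A A' B B' al be L) {r : ℝ}
    (hr : r ∈ spectrum ℝ (calTstar A A' B B' al be L)) : r < 1 :=
  lt_one_of_mem_spectrum_of_spectralRadius_lt_one hL <|
    spectrum_subset_of_isAdjointPair separatingRight_matrixTraceForm
      (isAdjointPair_calT_calTstar A A' B B' al be L) hr

open scoped Matrix.Norms.Elementwise in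
theorem posSemidef_of_sub_calTstar (hal : ∀ i, 0 ≤ al i) (hbe : ∀ j, 0 ≤ be j)
    (hL : Admissible A A' B B' al be L) {X : Matrix (Fin n) (Fin n) ℝ}
    (hX : (X - calTstar A A' B B' al be L X).PosSemidef) : X.PosSemidef :=
  mem_of_sub_map_mem (K := posSemidefCone (Fin n))
    (fun _ hY ↦ posSemidef_calTstar A A' B B' L hal hbe hY)
    (fun _ hr ↦ lt_one_of_mem_spectrum_calTstar hL hr) hX

end ClosedLoop

section Riccati

variable {n m p q : ℕ}
  (A : Matrix (Fin n) (Fin n) ℝ) (A' : Fin p → Matrix (Fin n) (Fin n) ℝ)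
  (B : Matrix (Fin n) (Fin m) ℝ) (B' : Fin q → Matrix (Fin n) (Fin m) ℝ)
  (al : Fin p → ℝ) (be : Fin q → ℝ)
  (Q : Matrix (Fin n) (Fin n) ℝ) (R : Matrix (Fin m) (Fin m) ℝ) (P : Matrix (Fin n) (Fin n) ℝ)

/-- The effective input weight `R + Bᵀ P B + Σⱼ β̄ⱼ Bⱼᵀ P Bⱼ` that the Riccati equation inverts. -/
def inputWeight : Matrix (Fin m) (Fin m) ℝ :=
  R + Bᵀ * P * B + ∑ j, be j • ((B' j)ᵀ * P * B' j)

/-- The Riccati operator: its fixed points are the solutions of the stochastic algebraic Riccati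
equation. A singular input weight has inverse `0` here. -/
noncomputable def riccatiMap : Matrix (Fin n) (Fin n) ℝ :=
  Q + Aᵀ * P * A + (∑ i, al i • ((A' i)ᵀ * P * A' i)) -
    Aᵀ * P * B * (inputWeight B B' be R P)⁻¹ * (Bᵀ * P * A)

/-- The feedback gain `-(R + Bᵀ P B + Σⱼ β̄ⱼ Bⱼᵀ P Bⱼ)⁻¹ Bᵀ P A`, the minimizer over `L` of
`𝒯_L^*(P) + Q + Lᵀ R L` for symmetric `P` with positive definite input weight. -/
noncomputable def riccatiGain : Matrix (Fin m) (Fin n) ℝ :=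
  -((inputWeight B B' be R P)⁻¹ * (Bᵀ * P * A))

variable {B B' be R P}

theorem posDef_inputWeight (hbe : ∀ j, 0 ≤ be j) (hR : R.PosDef) (hP : P.PosSemidef) :
    (inputWeight B B' be R P).PosDef :=
  (hR.add_posSemidef (posSemidef_transpose_mul_mul_same hP B)).add_posSemidef <|
    posSemidef_sum _ fun j _ ↦ (posSemidef_transpose_mul_mul_same hP (B' j)).smul (hbe j)

theorem transpose_mul_inputWeight_mul (L : Matrix (Fin m) (Fin n) ℝ) :
    Lᵀ * inputWeight B B' be R P * L =
      Lᵀ * R * L + Lᵀ * (Bᵀ * P * B) * L + ∑ j, be j • ((B' j * L)ᵀ * P * (B' j * L)) := by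
  simp only [inputWeight, Matrix.add_mul, Matrix.mul_add, Matrix.mul_sum, Matrix.sum_mul,
    Matrix.mul_smul, Matrix.smul_mul, transpose_mul, Matrix.mul_assoc]

theorem transpose_sub_riccatiGain_mul_mul (hP : P.IsSymm)
    (hSymm : (inputWeight B B' be R P).IsSymm) (hUnit : IsUnit (inputWeight B B' be R P).det)
    (L : Matrix (Fin m) (Fin n) ℝ) :
    (L - riccatiGain A B B' be R P)ᵀ * inputWeight B B' be R P *
        (L - riccatiGain A B B' be R P) =
      Lᵀ * inputWeight B B' be R P * L + Lᵀ * (Bᵀ * P * A) + Aᵀ * P * B * L +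
        Aᵀ * P * B * (inputWeight B B' be R P)⁻¹ * (Bᵀ * P * A) := by
  set S := inputWeight B B' be R P with hS
  have htranspose : (L - riccatiGain A B B' be R P)ᵀ = Lᵀ + Aᵀ * P * B * S⁻¹ := by
    simp only [riccatiGain, ← hS, sub_neg_eq_add, transpose_add, transpose_mul,
      transpose_nonsing_inv, hSymm.eq, hP.eq, transpose_transpose, Matrix.mul_assoc]
  rw [htranspose, riccatiGain, ← hS, sub_neg_eq_add]
  simp only [Matrix.add_mul, Matrix.mul_add, Matrix.mul_assoc,
    mul_nonsing_inv_cancel_left _ _ hUnit, nonsing_inv_mul_cancel_left _ _ hUnit]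
  abel

theorem calTstar_add_eq_riccatiMap_add (hP : P.IsSymm)
    (hSymm : (inputWeight B B' be R P).IsSymm) (hUnit : IsUnit (inputWeight B B' be R P).det)
    (L : Matrix (Fin m) (Fin n) ℝ) :
    calTstar A A' B B' al be L P + Q + Lᵀ * R * L =
      riccatiMap A A' B B' al be Q R P +
        (L - riccatiGain A B B' be R P)ᵀ * inputWeight B B' be R P *
          (L - riccatiGain A B B' be R P) := by
  have hloop : (A + B * L)ᵀ * P * (A + B * L) =
      Aᵀ * P * A + Lᵀ * (Bᵀ * P * A) + Aᵀ * P * B * L + Lᵀ * (Bᵀ * P * B) * L := by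
    simp only [transpose_add, transpose_mul, Matrix.add_mul, Matrix.mul_add, Matrix.mul_assoc]
    abel
  rw [transpose_sub_riccatiGain_mul_mul A hP hSymm hUnit, transpose_mul_inputWeight_mul,
    calTstar_apply, hloop, riccatiMap]
  abel

theorem posSemidef_calTstar_add_sub_riccatiMap (hP : P.IsSymm)
    (hS : (inputWeight B B' be R P).PosDef) (L : Matrix (Fin m) (Fin n) ℝ) :
    (calTstar A A' B B' al be L P + Q + Lᵀ * R * L -
      riccatiMap A A' B B' al be Q R P).PosSemidef := by
  rw [calTstar_add_eq_riccatiMap_add A A' al Q hP (isHermitian_iff_isSymm.1 hS.isHermitian)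
    hS.det_pos.ne'.isUnit, add_sub_cancel_left]
  exact posSemidef_transpose_mul_mul_same hS.posSemidef _

end Riccati

theorem stmt10_general {n m p q : ℕ}
    (A : Matrix (Fin n) (Fin n) ℝ) (A' : Fin p → Matrix (Fin n) (Fin n) ℝ)
    (B : Matrix (Fin n) (Fin m) ℝ) (B' : Fin q → Matrix (Fin n) (Fin m) ℝ)
    (al : Fin p → ℝ) (be : Fin q → ℝ) (hal : ∀ i, 0 ≤ al i) (hbe : ∀ j, 0 ≤ be j)
    (Q : Matrix (Fin n) (Fin n) ℝ) (R : Matrix (Fin m) (Fin m) ℝ)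
    (D : Matrix (Fin n) (Fin n) ℝ) (hD : D.PosSemidef)
    (Pstar : Matrix (Fin n) (Fin n) ℝ) (hPstar : Pstar.IsSymm)
    (hS : (inputWeight B B' be R Pstar).PosDef)
    (hSARE : Pstar = riccatiMap A A' B B' al be Q R Pstar)
    (L : Matrix (Fin m) (Fin n) ℝ) (hL : Admissible A A' B B' al be L)
    (P : Matrix (Fin n) (Fin n) ℝ) (hP : P = calTstar A A' B B' al be L P + Q + Lᵀ * R * L) :
    (P - Pstar).PosSemidef ∧ (Pstar * D).trace ≤ (P * D).trace := by
  have hgap := posSemidef_calTstar_add_sub_riccatiMap A A' al Q hPstar hS L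
  have hlyap : P - Pstar - calTstar A A' B B' al be L (P - Pstar) =
      calTstar A A' B B' al be L Pstar + Q + Lᵀ * R * L -
        riccatiMap A A' B B' al be Q R Pstar := by
    rw [← hSARE, map_sub]
    nth_rewrite 1 [hP]
    abel
  have hle : (P - Pstar).PosSemidef := posSemidef_of_sub_calTstar hal hbe hL (hlyap ▸ hgap)
  refine ⟨hle, ?_⟩
  rw [← sub_nonneg, ← trace_sub, ← Matrix.sub_mul]
  exact trace_mul_nonneg_of_posSemidef hle hD

theorem stmt10 {n m p q : ℕ} (hn : 0 < n) (hm : 0 < m)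
    (A : Matrix (Fin n) (Fin n) ℝ) (A' : Fin p → Matrix (Fin n) (Fin n) ℝ)
    (B : Matrix (Fin n) (Fin m) ℝ) (B' : Fin q → Matrix (Fin n) (Fin m) ℝ)
    (al : Fin p → ℝ) (be : Fin q → ℝ) (hal : ∀ i, 0 ≤ al i) (hbe : ∀ j, 0 ≤ be j)
    (Q : Matrix (Fin n) (Fin n) ℝ) (hQ : Q.PosSemidef)
    (R : Matrix (Fin m) (Fin m) ℝ) (hR : R.PosDef)
    (D : Matrix (Fin n) (Fin n) ℝ) (hD : D.PosDef)
    (Pstar : Matrix (Fin n) (Fin n) ℝ) (hPstar : Pstar.PosSemidef)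
    (hSARE : Pstar = Q + Aᵀ * Pstar * A + (∑ i, al i • ((A' i)ᵀ * Pstar * A' i)) -
      Aᵀ * Pstar * B *
        (R + Bᵀ * Pstar * B + ∑ j, be j • ((B' j)ᵀ * Pstar * B' j))⁻¹ *
        (Bᵀ * Pstar * A)) :
    ∀ L : Matrix (Fin m) (Fin n) ℝ, Admissible A A' B B' al be L →
      ∀ P : Matrix (Fin n) (Fin n) ℝ,
        P = calTstar A A' B B' al be L P + Q + Lᵀ * R * L →
        (P - Pstar).PosSemidef ∧ (Pstar * D).trace ≤ (P * D).trace := by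
  exact stmt10_general A A' B B' al be hal hbe Q R D hD.posSemidef Pstar
    (isHermitian_iff_isSymm.1 hPstar.isHermitian) (posDef_inputWeight hbe hR hPstar) hSARE
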